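/- (Curie–Weiss free energy.) Fix J > 0 and for each n ≥ 1 let Z_n = Σ_{x ∈ {-1,1}^n} exp((J/n) · (Σ_{i=1}^n x_i)²). Then (1/n) · log Z_n converges, as n → ∞, to max_{m ∈ [−1,1]} [ J·m² − ((1−m)/2)·log((1−m)/2) − ((1+m)/2)·log((1+m)/2) ], with the convention 0·log 0 = 0. -/

import Mathlib

open scoped BigOperators

noncomputable section

/-- The discrete cube `{-1,1}^n`, as functions `Fin n → ({-1,1} : Finset ℝ)`. -/
abbrev Cube (n : ℕ) := Fin n → ({-1, 1} : Finset ℝ)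

/-!
The energy of a configuration depends only on its fraction `k / n` of up spins, so
`Z_n = ∑ₖ (n choose k) exp (n f (k / n))`. One Bernstein weight is at most `1`, and evaluated at
`k / n` this says that `(n choose k) ≤ exp (n H (k / n))` with `H` the binary entropy, whence
`Z_n ≤ (n + 1) exp (n max (f + H))`. Conversely, Jensen's inequality for the binomial distribution
of parameter `p` gives the Gibbs variational bound `Z_n ≥ exp (n (Bₙ f p + H p))`, where `Bₙ f` is
the Bernstein approximation of `f`, which converges to `f`; take `p` to be a maximiser of `f + H`.
-/

open Real Filter Topology unitInterval

section Bernstein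

variable {n : ℕ} (p : I)

theorem bernstein_le_one (k : Fin (n + 1)) : bernstein n k p ≤ 1 :=
  (Finset.single_le_sum (f := fun j : Fin (n + 1) ↦ bernstein n j p)
    (fun _ _ ↦ bernstein_nonneg) (Finset.mem_univ k)).trans_eq (bernstein.probability n p)

theorem sum_bernstein_mul_natCast : ∑ k : Fin (n + 1), bernstein n k p * k = n * p := by
  have h := congrArg (Polynomial.eval (p : ℝ)) (bernsteinPolynomial.sum_smul ℝ n)
  simpa [Finset.sum_range, Polynomial.eval_finsetSum, bernsteinPolynomial, bernstein_apply,
    mul_comm] using h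

-- Equality can fail at `p = 0` and `p = 1`, because of the convention `log 0 = 0`.
theorem bernstein_le_choose_mul_exp (k : Fin (n + 1)) :
    bernstein n k p ≤ n.choose k * exp (k * log p + (n - k) * log (1 - p)) := by
  have hq : 0 ≤ 1 - (p : ℝ) := one_minus_nonneg p
  rw [bernstein_apply, mul_assoc, exp_add, ← Nat.cast_sub k.is_le, ← log_pow, ← log_pow]
  gcongr <;> exact le_exp_log _

theorem sum_bernstein_mul_log :
    ∑ k : Fin (n + 1), bernstein n k p * (k * log p + (n - k) * log (1 - p)) =
      -(n * binEntropy p) := by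
  calc
    _ = (∑ k : Fin (n + 1), bernstein n k p * k) * (log p - log (1 - p)) +
        (∑ k : Fin (n + 1), bernstein n k p) * (n * log (1 - p)) := by
      simp only [Finset.sum_mul, ← Finset.sum_add_distrib]
      exact Finset.sum_congr rfl fun k _ ↦ by ring
    _ = -(n * binEntropy p) := by
      rw [sum_bernstein_mul_natCast, bernstein.probability, binEntropy, log_inv, log_inv]
      ring

end Bernstein

theorem div_pow_mul_one_sub_div_pow_eq_exp_binEntropy {n k : ℕ} (hk : k ≤ n) :
    (k / n : ℝ) ^ k * (1 - k / n) ^ (n - k) = exp (-(n * binEntropy (k / n))) := by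
  obtain rfl | hk₀ := k.eq_zero_or_pos
  · simp
  obtain rfl | hkn := hk.eq_or_lt
  · simp [hk₀.ne']
  have hn : (0 : ℝ) < n := mod_cast hk₀.trans hkn
  have hp : 0 < (k / n : ℝ) := by positivity
  have hq : 0 < 1 - (k / n : ℝ) := sub_pos.2 <| (div_lt_one hn).2 <| mod_cast hkn
  rw [← exp_log (pow_pos hp k), ← exp_log (pow_pos hq (n - k)), ← exp_add, log_pow, log_pow,
    Nat.cast_sub hk, binEntropy, log_inv, log_inv]
  congr 1
  field_simp
  ring

theorem choose_le_exp_binEntropy (n k : ℕ) :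
    (n.choose k : ℝ) ≤ exp (n * binEntropy (k / n)) := by
  obtain hnk | hkn := lt_or_ge n k
  · rw [Nat.choose_eq_zero_of_lt hnk, Nat.cast_zero]
    exact (exp_pos _).le
  let j : Fin (n + 1) := ⟨k, Nat.lt_succ_of_le hkn⟩
  have h : bernstein n k (bernstein.z j) ≤ 1 := bernstein_le_one _ j
  rwa [bernstein_apply, mul_assoc, bernstein.z, div_pow_mul_one_sub_div_pow_eq_exp_binEntropy hkn,
    exp_neg, ← div_eq_mul_inv, div_le_one (exp_pos _)] at h

/-- The partition function of `n` two-valued spins whose energy per spin `f` is a function of the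
fraction `k / n` of up spins; configurations are grouped by their number `k` of up spins. -/
def binomialPartition (f : C(I, ℝ)) (n : ℕ) : ℝ :=
  ∑ k : Fin (n + 1), n.choose k * exp (n * f (bernstein.z k))

section BinomialPartition

variable (f : C(I, ℝ)) (n : ℕ)

theorem binomialPartition_le {M : ℝ} (hM : ∀ p : I, f p + binEntropy p ≤ M) :
    binomialPartition f n ≤ (n + 1) * exp (n * M) := by
  have hterm (k : Fin (n + 1)) : n.choose k * exp (n * f (bernstein.z k)) ≤ exp (n * M) := calc
    _ ≤ exp (n * binEntropy (bernstein.z k)) * exp (n * f (bernstein.z k)) := by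
      gcongr
      exact choose_le_exp_binEntropy n k
    _ = exp (n * (f (bernstein.z k) + binEntropy (bernstein.z k))) := by
      rw [← exp_add]
      ring_nf
    _ ≤ exp (n * M) := by
      gcongr
      exact hM _
  simpa [binomialPartition] using Finset.sum_le_sum fun k (_ : k ∈ Finset.univ) ↦ hterm k

theorem exp_bernsteinApproximation_add_binEntropy_le (p : I) :
    exp (n * (bernsteinApproximation n f p + binEntropy p)) ≤ binomialPartition f n := by
  let logWeight (k : Fin (n + 1)) : ℝ := k * log p + (n - k) * log (1 - p)
  have hmean : ∑ k : Fin (n + 1), bernstein n k p * (n * f (bernstein.z k) - logWeight k) =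
      n * (bernsteinApproximation n f p + binEntropy p) := by
    rw [mul_add, bernsteinApproximation.apply, Finset.mul_sum, ← sub_neg_eq_add,
      ← sum_bernstein_mul_log, ← Finset.sum_sub_distrib]
    exact Finset.sum_congr rfl fun k _ ↦ by simp only [smul_eq_mul, logWeight]; ring
  calc
    _ = exp (∑ k : Fin (n + 1), bernstein n k p * (n * f (bernstein.z k) - logWeight k)) := by
      rw [hmean]
    _ ≤ ∑ k : Fin (n + 1), bernstein n k p * exp (n * f (bernstein.z k) - logWeight k) :=
      convexOn_exp.map_sum_le (fun _ _ ↦ bernstein_nonneg) (bernstein.probability n p)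
        fun _ _ ↦ Set.mem_univ _
    _ ≤ ∑ k : Fin (n + 1), n.choose k * exp (logWeight k) *
          exp (n * f (bernstein.z k) - logWeight k) := by
      gcongr with k
      exact bernstein_le_choose_mul_exp p k
    _ = binomialPartition f n := by
      simp only [binomialPartition, mul_assoc, ← exp_add, add_sub_cancel]

theorem binomialPartition_pos : 0 < binomialPartition f n :=
  (exp_pos _).trans_le (exp_bernsteinApproximation_add_binEntropy_le f n 0)

end BinomialPartition

theorem tendsto_log_natCast_add_one_div :
    Tendsto (fun n : ℕ ↦ log (n + 1) / n) atTop (𝓝 0) := by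
  simpa [Function.comp_def] using (tendsto_pow_log_div_mul_add_atTop 1 (-1) 1 one_ne_zero).comp
    (tendsto_atTop_add_const_right _ 1 tendsto_natCast_atTop_atTop)

theorem tendsto_log_binomialPartition_div (f : C(I, ℝ)) :
    Tendsto (fun n : ℕ ↦ log (binomialPartition f n) / n) atTop
      (𝓝 (⨆ p : I, (f p + binEntropy p))) := by
  set M := ⨆ p : I, (f p + binEntropy p)
  have hcompact : IsCompact (Set.range fun p : I ↦ f p + binEntropy p) :=
    isCompact_range (by fun_prop)
  obtain ⟨p, hp : f p + binEntropy p = M⟩ := hcompact.sSup_mem (Set.range_nonempty _)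
  have hlower : Tendsto (fun n ↦ bernsteinApproximation n f p + binEntropy p) atTop (𝓝 M) :=
    hp ▸ (((continuous_eval_const (F := C(I, ℝ)) p).tendsto f).comp
      (bernsteinApproximation_uniform f)).add_const _
  have hupper : Tendsto (fun n : ℕ ↦ log (n + 1) / n + M) atTop (𝓝 M) := by
    simpa using tendsto_log_natCast_add_one_div.add_const M
  refine tendsto_of_tendsto_of_tendsto_of_le_of_le' hlower hupper ?_ ?_ <;>
    filter_upwards [eventually_gt_atTop 0] with n hn
  · rw [le_div_iff₀' (mod_cast hn), le_log_iff_exp_le (binomialPartition_pos f n)]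
    exact exp_bernsteinApproximation_add_binEntropy_le f n p
  · have hn' : (n : ℝ) ≠ 0 := mod_cast hn.ne'
    calc
      log (binomialPartition f n) / n ≤ log ((n + 1) * exp (n * M)) / n := by
        gcongr
        · exact binomialPartition_pos f n
        · exact binomialPartition_le f n (le_ciSup hcompact.bddAbove)
      _ = log (n + 1) / n + M := by
        rw [log_mul (by positivity) (exp_ne_zero _), log_exp]
        field_simp

namespace Cube

variable {n : ℕ}

theorem eq_neg_one_or_eq_one (x : Cube n) (i : Fin n) : (x i : ℝ) = -1 ∨ (x i : ℝ) = 1 := by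
  simpa only [Finset.mem_insert, Finset.mem_singleton] using (x i).2

/-- A configuration of spins corresponds to the set of its up spins. -/
def equivUpSpins (n : ℕ) : Cube n ≃ Finset (Fin n) where
  toFun x := {i | (x i : ℝ) = 1}
  invFun s i := if i ∈ s then ⟨1, by simp⟩ else ⟨-1, by simp⟩
  left_inv x := by
    ext i
    obtain h | h := eq_neg_one_or_eq_one x i <;> norm_num [h]
  right_inv s := by
    ext i
    by_cases h : i ∈ s <;> norm_num [h]

theorem sum_eq_two_mul_card_upSpins_sub (x : Cube n) :
    ∑ i, (x i : ℝ) = 2 * (equivUpSpins n x).card - n := by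
  have hspin (i : Fin n) : (x i : ℝ) = 2 * (if (x i : ℝ) = 1 then 1 else 0) - 1 := by
    obtain h | h := eq_neg_one_or_eq_one x i <;> norm_num [h]
  rw [Finset.sum_congr rfl fun i _ ↦ hspin i, Finset.sum_sub_distrib, ← Finset.mul_sum]
  simp [equivUpSpins]

theorem sum_comp_sum_eq_sum_choose {α : Type*} [AddCommMonoid α] (g : ℝ → α) :
    ∑ x : Cube n, g (∑ i, (x i : ℝ)) =
      ∑ k : Fin (n + 1), n.choose k • g (2 * (k : ℕ) - n) := by
  calc
    _ = ∑ s : Finset (Fin n), g (2 * s.card - n) :=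
      Fintype.sum_equiv (equivUpSpins n) _ _ fun x ↦ by rw [sum_eq_two_mul_card_upSpins_sub]
    _ = _ := by
      rw [← Finset.powerset_univ,
        Finset.sum_powerset_apply_card (fun k ↦ g (2 * (k : ℝ) - n)), Finset.card_fin,
        Finset.sum_range]

theorem sum_exp_eq_binomialPartition (hn : n ≠ 0) {φ : ℝ → ℝ} {f : C(I, ℝ)}
    (hf : ∀ p : I, f p = φ (2 * p - 1)) :
    ∑ x : Cube n, exp (n * φ ((∑ i, (x i : ℝ)) / n)) = binomialPartition f n := by
  have hn' : (n : ℝ) ≠ 0 := mod_cast hn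
  rw [sum_comp_sum_eq_sum_choose fun s ↦ exp (n * φ (s / n)), binomialPartition]
  refine Finset.sum_congr rfl fun k _ ↦ ?_
  rw [nsmul_eq_mul, hf, bernstein.z, sub_div, div_self hn', mul_div_assoc]

end Cube

theorem sSup_image_Icc_neg_one_one {α : Type*} [SupSet α] (F : ℝ → α) :
    sSup (F '' Set.Icc (-1) 1) = ⨆ p : I, F (2 * p - 1) := by
  have himage : (fun p : ℝ ↦ 2 * p + -1) '' I = Set.Icc (-1) 1 := by
    rw [unitInterval, Set.image_affine_Icc' two_pos]
    norm_num
  rw [← himage, Set.image_image, sSup_image']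
  rfl

theorem curieWeiss_free_energy_general (φ : ℝ → ℝ) (hφ : ContinuousOn φ (Set.Icc (-1) 1))
    (Z : ℕ → ℝ)
    (hZ : ∀ n : ℕ, 1 ≤ n → Z n = ∑ x : Cube n, exp (n * φ ((∑ i, (x i : ℝ)) / n))) :
    Tendsto (fun n : ℕ ↦ 1 / (n : ℝ) * log (Z n)) atTop
      (𝓝 (sSup ((fun m : ℝ ↦ φ m - (1 - m) / 2 * log ((1 - m) / 2)
        - (1 + m) / 2 * log ((1 + m) / 2)) '' Set.Icc (-1) 1))) := by
  let f : C(I, ℝ) := ⟨fun p ↦ φ (2 * p - 1), hφ.comp_continuous (by fun_prop) fun p ↦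
    ⟨by linarith [p.2.1], by linarith [p.2.2]⟩⟩
  have hfreeEnergy (p : I) : φ (2 * p - 1) - (1 - (2 * p - 1)) / 2 * log ((1 - (2 * p - 1)) / 2)
      - (1 + (2 * p - 1)) / 2 * log ((1 + (2 * p - 1)) / 2) = f p + binEntropy p := by
    rw [show (1 - (2 * p - 1)) / 2 = 1 - (p : ℝ) by ring,
      show (1 + (2 * p - 1)) / 2 = (p : ℝ) by ring, binEntropy, log_inv, log_inv]
    simp only [f, ContinuousMap.coe_mk]
    ring
  simp only [sSup_image_Icc_neg_one_one, hfreeEnergy]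
  refine (tendsto_log_binomialPartition_div f).congr' ?_
  filter_upwards [eventually_ge_atTop 1] with n hn
  rw [hZ n hn, Cube.sum_exp_eq_binomialPartition (f := f) (by lia) fun _ ↦ rfl, div_eq_inv_mul,
    one_div]

/-- Curie–Weiss free energy: `(1/n) log Z_n` converges to
`max_{m ∈ [-1,1]} [ J m² − ((1−m)/2) log((1−m)/2) − ((1+m)/2) log((1+m)/2) ]`
(with the convention `0 · log 0 = 0`, automatic since `Real.log 0 = 0`). -/
theorem curieWeiss_free_energy (J : ℝ) (hJ : 0 < J) (Z : ℕ → ℝ)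
    (hZ : ∀ n : ℕ, 1 ≤ n →
      Z n = ∑ x : Cube n, Real.exp ((J / n) * (∑ i : Fin n, (x i : ℝ)) ^ 2)) :
    Filter.Tendsto (fun n : ℕ => (1 / (n : ℝ)) * Real.log (Z n)) Filter.atTop
      (nhds (sSup ((fun m : ℝ =>
        J * m ^ 2 - ((1 - m) / 2) * Real.log ((1 - m) / 2)
          - ((1 + m) / 2) * Real.log ((1 + m) / 2)) '' Set.Icc (-1 : ℝ) 1))) :=
  curieWeiss_free_energy_general (J * · ^ 2) (by fun_prop) Z fun n hn ↦ by
    rw [hZ n hn]; field_simp
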